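/- arXiv:2207.05644 — 2 statements merged into one kernel-verified Lean document; each statement's English description precedes it below -/
import Mathlib

section
/- Let (x,v) : I → ℝ³ × ℝ³ be a C¹ solution of the repulsive Kepler ODE with x(t) ≠ 0 and with constant angular momentum L = x × v ≠ 0 and Runge–Lenz vector R. Then the map t ↦ v(t) + (q/(2|L|²)) · L × x(t)/|x(t)| is constant on I, equal to L × R/|L|². Consequently v(t) moves on the 'velocity circle' of radius q/(2|L|) centered at L × R/|L|² in the plane orthogonal to L. -/
/-!
Everything is pointwise in `t`. Expanding the Runge–Lenz vector with the triple product identity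
`L × (v × L) = |L|² v - ⟪L, v⟫ L` and using `v ⟂ L = x × v` gives
`L × R = |L|² v + (q/2) L × x/|x|`, which is the first claim after division by `|L|²`.
Hence `v - L × R/|L|² = -(q/(2|L|²)) L × x/|x|`. This vector is orthogonal to `L`, and its length
is `q/(2|L|)` by Lagrange's identity, because `x/|x|` is a unit vector orthogonal to `L`.
-/

open scoped RealInnerProductSpace

noncomputable section

/-- Euclidean three-space. -/
abbrev R3 : Type := EuclideanSpace ℝ (Fin 3)

/-- The cross product on `ℝ³`. -/
def cross3 (x y : R3) : R3 :=
  (WithLp.equiv 2 (Fin 3 → ℝ)).symm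
    ![x 1 * y 2 - x 2 * y 1, x 2 * y 0 - x 0 * y 2, x 0 * y 1 - x 1 * y 0]

/-- The Runge–Lenz vector `R(x,v) = v × (x × v) + (q/2)·x/|x|`. -/
def rungeLenz (q : ℝ) (x v : R3) : R3 :=
  cross3 v (cross3 x v) + (q / 2) • ‖x‖⁻¹ • x

theorem R3.inner_eq (a b : R3) : ⟪a, b⟫ = a 0 * b 0 + a 1 * b 1 + a 2 * b 2 := by
  simp [PiLp.inner_apply, Fin.sum_univ_three, mul_comm]

theorem R3.norm_sq_eq (a : R3) : ‖a‖ ^ 2 = a 0 ^ 2 + a 1 ^ 2 + a 2 ^ 2 := by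
  rw [← real_inner_self_eq_norm_sq, R3.inner_eq]
  ring

theorem cross3_add (a b c : R3) : cross3 a (b + c) = cross3 a b + cross3 a c := by
  ext i
  fin_cases i <;> simp [cross3] <;> ring

theorem cross3_smul (r : ℝ) (a b : R3) : cross3 a (r • b) = r • cross3 a b := by
  ext i
  fin_cases i <;> simp [cross3] <;> ring

theorem inner_cross3_left (a b : R3) : ⟪cross3 a b, a⟫ = 0 := by
  simp [R3.inner_eq, cross3]
  ring

theorem inner_cross3_right (a b : R3) : ⟪cross3 a b, b⟫ = 0 := by
  simp [R3.inner_eq, cross3]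
  ring

theorem cross3_cross3_self (a b : R3) :
    cross3 a (cross3 b a) = ‖a‖ ^ 2 • b - ⟪a, b⟫ • a := by
  rw [R3.norm_sq_eq, R3.inner_eq]
  ext i
  fin_cases i <;> simp [cross3] <;> ring

/-- Lagrange's identity. -/
theorem norm_cross3_sq (a b : R3) :
    ‖cross3 a b‖ ^ 2 = ‖a‖ ^ 2 * ‖b‖ ^ 2 - ⟪a, b⟫ ^ 2 := by
  simp only [R3.norm_sq_eq, R3.inner_eq]
  simp [cross3]
  ring

/-- Along a solution of the repulsive Kepler ODE with nonzero conserved angular momentum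
`L` and Runge–Lenz vector `R`, the map `t ↦ v(t) + (q/(2|L|²))·L × (x(t)/|x(t)|)` is
constant, equal to `L × R/|L|²`; consequently `v(t)` moves on the "velocity circle"
of radius `q/(2|L|)` centered at `L × R/|L|²` in the plane orthogonal to `L`. -/
theorem kepler_velocity_circle (q : ℝ) (hq : 0 < q)
    (I : Set ℝ) (hI : Convex ℝ I) (x v : ℝ → R3) (L R : R3) (hL0 : L ≠ 0)
    (hx0 : ∀ t ∈ I, x t ≠ 0)
    (hx : ∀ t ∈ I, HasDerivWithinAt x (v t) I t)
    (hv : ∀ t ∈ I, HasDerivWithinAt v ((q / 2 / ‖x t‖ ^ 3) • x t) I t)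
    (hL : ∀ t ∈ I, cross3 (x t) (v t) = L)
    (hR : ∀ t ∈ I, rungeLenz q (x t) (v t) = R) :
    ∀ t ∈ I,
      v t + (q / (2 * ‖L‖ ^ 2)) • cross3 L (‖x t‖⁻¹ • x t) = (‖L‖ ^ 2)⁻¹ • cross3 L R ∧
      ‖v t - (‖L‖ ^ 2)⁻¹ • cross3 L R‖ = q / (2 * ‖L‖) ∧
      ⟪v t - (‖L‖ ^ 2)⁻¹ • cross3 L R, L⟫ = (0 : ℝ) := by
  intro t ht
  have hLn : ‖L‖ ≠ 0 := norm_ne_zero_iff.mpr hL0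
  have hxn : ‖x t‖ ≠ 0 := norm_ne_zero_iff.mpr (hx0 t ht)
  have hLv : ⟪L, v t⟫ = 0 := by rw [← hL t ht, inner_cross3_right]
  have hLx : ⟪L, x t⟫ = 0 := by rw [← hL t ht, inner_cross3_left]
  have hunit : ‖‖x t‖⁻¹ • x t‖ = 1 := by
    rw [norm_smul, norm_inv, norm_norm, inv_mul_cancel₀ hxn]
  have hLu : ⟪L, ‖x t‖⁻¹ • x t⟫ = 0 := by rw [inner_smul_right, hLx, mul_zero]
  have hLR : cross3 L R = ‖L‖ ^ 2 • v t + (q / 2) • cross3 L (‖x t‖⁻¹ • x t) := by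
    rw [← hR t ht, rungeLenz, hL t ht, cross3_add, cross3_cross3_self, hLv, zero_smul, sub_zero,
      cross3_smul]
  generalize ‖x t‖⁻¹ • x t = u at *
  have hmain : v t + (q / (2 * ‖L‖ ^ 2)) • cross3 L u = (‖L‖ ^ 2)⁻¹ • cross3 L R := by
    rw [hLR, smul_add, smul_smul, smul_smul, inv_mul_cancel₀ (pow_ne_zero 2 hLn), one_smul]
    congr 2
    field_simp
  have hdiff : v t - (‖L‖ ^ 2)⁻¹ • cross3 L R = -((q / (2 * ‖L‖ ^ 2)) • cross3 L u) := by
    rw [← hmain]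
    abel
  have hcross : ‖cross3 L u‖ = ‖L‖ := by
    have h := norm_cross3_sq L u
    rw [hunit, hLu] at h
    exact (sq_eq_sq₀ (norm_nonneg _) (norm_nonneg _)).mp (by linarith)
  refine ⟨hmain, ?_, ?_⟩
  · rw [hdiff, norm_neg, norm_smul, hcross, Real.norm_of_nonneg (by positivity)]
    field_simp
  · rw [hdiff, inner_neg_left, inner_smul_left, inner_cross3_left, mul_zero, neg_zero]
end
end

section
/- Let q > 0 and let x, a ∈ ℝ³ be nonzero with ρ(x,a) > 1. Then for each sign ι ∈ {+1, −1} the generating functions preserve angular momentum: x × ∇_x S_ι(x,a) = ∇_a S_ι(x,a) × a, and both sides equal ((1 + ι·K′(ρ(x,a)))/2)·(x × a), where K′(s) = √(1 − 1/s). -/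
open scoped RealInnerProductSpace

noncomputable section

/-- `ρ(x,a) = (|a|/(2q))(|x||a| + x·a)`. -/
def rhoF (q : ℝ) (x a : R3) : ℝ := ‖a‖ / (2 * q) * (‖x‖ * ‖a‖ + ⟪x, a⟫)

/-- `K(s) = √(s(s−1)) − ln(√s + √(s−1))`. -/
def KF (s : ℝ) : ℝ := Real.sqrt (s * (s - 1)) - Real.log (Real.sqrt s + Real.sqrt (s - 1))

/-- The generating function `S_ι(x,a) = ι·(q/|a|)·K(ρ(x,a)) − (|x||a| − x·a)/2`. -/
def Sgen (q ι : ℝ) (x a : R3) : ℝ :=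
  ι * (q / ‖a‖) * KF (rhoF q x a) - (‖x‖ * ‖a‖ - ⟪x, a⟫) / 2

/-! The function `S_ι(x,a)` depends on `x` and `a` only through `|x|`, `|a|` and `x·a`. Hence
`∇ₓ S_ι` is a combination of `x` and `a`, in which the coefficient of `a` is `c = ∂S_ι/∂(x·a)`,
and `∇ₐ S_ι` is a combination of `a` and `x`, in which the coefficient of `x` is the same `c`
(`gradient_of_norm_inner`). Crossing with `x`, resp. `a`, kills the radial part, so
`x × ∇ₓ S_ι = c (x × a) = ∇ₐ S_ι × a`. Finally `∂ρ/∂(x·a) = |a|/(2q)`, so the chain rule with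
`K′(s) = √(1 − 1/s)` (`hasDerivAt_KF`) gives `c = (1 + ι K′(ρ))/2`. -/

/-- The function `S_ι` expressed through `R = |x|`, `r = |a|` and `t = x·a`. -/
def Sred (q ι R r t : ℝ) : ℝ :=
  ι * (q / r) * KF (r / (2 * q) * (R * r + t)) - (R * r - t) / 2

theorem hasDerivAt_KF {s : ℝ} (hs : 1 < s) : HasDerivAt KF (Real.sqrt (1 - 1 / s)) s := by
  have hs0 : 0 < s := by linarith
  have hs1 : 0 < s - 1 := by linarith
  have h1 : HasDerivAt (fun s : ℝ => s - 1) 1 s := (hasDerivAt_id s).sub_const 1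
  have h2 : HasDerivAt (fun s : ℝ => s * (s - 1)) (1 * (s - 1) + s * 1) s :=
    (hasDerivAt_id s).mul h1
  have hu := Real.sqrt_pos.2 hs0
  have hv := Real.sqrt_pos.2 hs1
  have h3 := (h2.sqrt (mul_pos hs0 hs1).ne').sub
    ((((hasDerivAt_id s).sqrt hs0.ne').add (h1.sqrt hs1.ne')).log (by simp; positivity))
  refine HasDerivAt.congr_deriv (f := KF) h3 ?_
  have e : 1 - 1 / s = (s - 1) / s := by field_simp
  rw [e, Real.sqrt_div hs1.le, Real.sqrt_mul hs0.le]
  have hu2 := Real.sq_sqrt hs0.le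
  have hv2 := Real.sq_sqrt hs1.le
  simp only [id, Pi.add_apply]
  set u := Real.sqrt s
  set v := Real.sqrt (s - 1)
  have : s - 1 = v ^ 2 := hv2.symm
  rw [this, ← hu2]
  field_simp
  linear_combination (u + v) * (hu2 - hv2)

/-- The gradient of `b ↦ G(|b|, x·b)` is a combination of `b` and `x` whose `x`-coefficient is
the partial derivative of `G` in its second argument. -/
theorem gradient_of_norm_inner (G : ℝ × ℝ → ℝ) (x b : R3) (hb : b ≠ 0) (c : ℝ)
    (hG : DifferentiableAt ℝ G (‖b‖, ⟪x, b⟫))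
    (hc : HasDerivAt (fun t => G (‖b‖, t)) c ⟪x, b⟫) :
    ∃ d : ℝ, gradient (fun y => G (‖y‖, ⟪x, y⟫)) b = d • b + c • x := by
  obtain ⟨G', hG'⟩ := hG
  have hn : HasFDerivAt (fun y : R3 => ‖y‖) (‖b‖⁻¹ • innerSL ℝ b) b := by
    have h := (hasStrictFDerivAt_norm_sq b).hasFDerivAt.sqrt
      (pow_ne_zero 2 (norm_ne_zero_iff.2 hb))
    simp only [Real.sqrt_sq (norm_nonneg _)] at h
    refine h.congr_fderiv ?_
    ext w
    have := norm_ne_zero_iff.2 hb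
    simp
    field_simp
  have hi : HasFDerivAt (fun y : R3 => ⟪x, y⟫) (innerSL ℝ x) b := (innerSL ℝ x).hasFDerivAt
  have hcomp := HasFDerivAt.comp b hG' (hn.prodMk hi)
  have hc' : c = G' (0, 1) :=
    hc.unique (hG'.comp_hasDerivAt _ ((hasDerivAt_const _ ‖b‖).prodMk (hasDerivAt_id _)))
  refine ⟨G' (1, 0) * ‖b‖⁻¹, HasGradientAt.gradient ?_⟩
  refine HasFDerivAt.congr_fderiv hcomp ?_
  ext w
  have key : ∀ p r : ℝ, G' (p, r) = p * G' (1, 0) + r * G' (0, 1) := by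
    intro p r
    have : ((p, r) : ℝ × ℝ) = p • (1, 0) + r • (0, 1) := by simp
    rw [this, map_add, map_smul, map_smul]; simp
  simp only [ContinuousLinearMap.comp_apply, ContinuousLinearMap.prod_apply, hc']
  rw [key]
  simp
  ring

/-- The common coefficient of the two gradients: `∂S_ι/∂(x·a) = (1 + ι K′(ρ))/2`. -/
theorem hasDerivAt_Sred {q ι R r t : ℝ} (hq : 0 < q) (hr : 0 < r)
    (h : 1 < r / (2 * q) * (R * r + t)) :
    HasDerivAt (fun t => Sred q ι R r t)
      ((1 + ι * Real.sqrt (1 - 1 / (r / (2 * q) * (R * r + t)))) / 2) t := by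
  have h1 : HasDerivAt (fun t : ℝ => r / (2 * q) * (R * r + t)) (r / (2 * q) * 1) t :=
    ((hasDerivAt_id t).const_add _).const_mul _
  have h2 := (((hasDerivAt_KF h).comp t h1).const_mul (ι * (q / r))).sub
    (((hasDerivAt_id t).const_sub (R * r)).div_const 2)
  refine HasDerivAt.congr_deriv (f := fun t => Sred q ι R r t) h2 ?_
  field_simp
  ring

theorem cross3_left (x a : R3) (c d : ℝ) : cross3 x (d • x + c • a) = c • cross3 x a := by
  ext i
  fin_cases i <;> simp [cross3] <;> ring

theorem cross3_right (x a : R3) (c d : ℝ) : cross3 (d • a + c • x) a = c • cross3 x a := by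
  ext i
  fin_cases i <;> simp [cross3] <;> ring

/-- On the region `ρ(x,a) > 1` the generating functions preserve angular momentum:
`x × ∇ₓ S_ι(x,a) = ∇ₐ S_ι(x,a) × a`, and both sides equal
`((1 + ι·K′(ρ(x,a)))/2)·(x × a)` where `K′(s) = √(1 − 1/s)`. -/
theorem generating_function_angular_momentum (q : ℝ) (hq : 0 < q)
    (ι : ℝ) (hι : ι = 1 ∨ ι = -1)
    (x a : R3) (hx : x ≠ 0) (ha : a ≠ 0) (hρ : 1 < rhoF q x a) :
    cross3 x (gradient (fun y => Sgen q ι y a) x) =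
      cross3 (gradient (fun b => Sgen q ι x b) a) a ∧
    cross3 x (gradient (fun y => Sgen q ι y a) x) =
      ((1 + ι * Real.sqrt (1 - 1 / rhoF q x a)) / 2) • cross3 x a := by
  have hr : 0 < ‖a‖ := norm_pos_iff.2 ha
  have hK : DifferentiableAt ℝ KF (‖a‖ / (2 * q) * (‖x‖ * ‖a‖ + ⟪x, a⟫)) :=
    (hasDerivAt_KF hρ).differentiableAt
  have hc := hasDerivAt_Sred (ι := ι) hq hr hρ
  obtain ⟨d, hd⟩ := gradient_of_norm_inner (fun p => Sred q ι p.1 ‖a‖ p.2) a x hx _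
    (by
      have h := DifferentiableAt.comp (x := ((‖x‖, ⟪a, x⟫) : ℝ × ℝ))
        (f := fun p : ℝ × ℝ => ‖a‖ / (2 * q) * (p.1 * ‖a‖ + p.2)) (g := KF)
        (by rw [real_inner_comm]; exact hK) (by fun_prop)
      exact (h.const_mul _).sub (by fun_prop))
    (by rw [real_inner_comm]; exact hc)
  obtain ⟨e, he⟩ := gradient_of_norm_inner (fun p => Sred q ι ‖x‖ p.1 p.2) x a ha _
    (by
      have h := DifferentiableAt.comp (x := ((‖a‖, ⟪x, a⟫) : ℝ × ℝ))
        (f := fun p : ℝ × ℝ => p.1 / (2 * q) * (‖x‖ * p.1 + p.2)) (g := KF)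
        hK (by fun_prop)
      have h' : DifferentiableAt ℝ (fun p : ℝ × ℝ => ι * (q / p.1)) (‖a‖, ⟪x, a⟫) := by
        fun_prop (disch := exact hr.ne')
      exact (h'.mul h).sub (by fun_prop))
    hc
  have hx' : (fun y => Sgen q ι y a) = fun y => Sred q ι ‖y‖ ‖a‖ ⟪a, y⟫ := by
    funext y
    rw [real_inner_comm]
    rfl
  have ha' : (fun b => Sgen q ι x b) = fun b => Sred q ι ‖x‖ ‖b‖ ⟪x, b⟫ := rfl
  rw [hx', ha', hd, he, cross3_left, cross3_right]
  exact ⟨rfl, rfl⟩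
end
end
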